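/- Let r ∈ ℕ, define a_r(k) := (1/c_r) ∏_{1 ≤ ℓ ≤ j ≤ r} (k_ℓ + ... + k_j) with c_r := r!·(r-1)!···1!, let ϱ_r(m) := #{k ∈ ℕ^r : a_r(k) = m} and R_r(x) := Σ_{m ≤ x} ϱ_r(m). Then R_r(x) = C_r · x^{2/(r+1)} + O_r(x^{2(r-1)/r²}), where C_r := ∫_{y ∈ ℝ_{>0}^r, a_r(y) ≤ 1} dy. -/

import Mathlib

open Finset MeasureTheory

/-- `h_r(y) = ∏_{1 ≤ ℓ ≤ j ≤ r} (y_ℓ + ⋯ + y_j)`. -/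
noncomputable def hpoly (r : ℕ) (y : Fin r → ℝ) : ℝ :=
  ∏ p ∈ Finset.univ.filter (fun p : Fin r × Fin r => p.1 ≤ p.2),
    ∑ i ∈ Finset.Icc p.1 p.2, y i

/-- `c_r = r!(r-1)!⋯1!`. -/
def crconst (r : ℕ) : ℕ := ∏ i ∈ Finset.range r, Nat.factorial (i + 1)

/-- The Weyl dimension polynomial `a_r(k) = h_r(k)/c_r`. -/
noncomputable def apoly (r : ℕ) (y : Fin r → ℝ) : ℝ := hpoly r y / crconst r

/-!
For a region that is closed under decreasing coordinates, the unit cubes below its lattice points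
lie inside it, and together with the parts where some coordinate is at most `1` (the walls) they
have at least its volume. By homogeneity the volume of `{a_r ≤ x}` is `C_r x ^ (2 / (r + 1))`, so
everything rests on the volume of a wall `{h_r ≤ X, y_i ≤ 1}`.

With `t_j = log y_j` and `L = log X`, keeping only the larger end term of each factor of `h_r`
gives `∑_{j ≤ k} max (t_j, t_k) ≤ L`. If `t_i ≤ 0`, this bounds both the sum and the spread of the
other `t_j`: `∑_{j ≠ i} (u_j + |u_j| / 20) ≤ -3 t_i / 4` for `u_j = t_j - 2 L / r²`. After
exponentiation the indicator of the wall is bounded by a product of integrable functions of one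
variable, in which the `r - 1` coordinates `y_j` are rescaled by `X ^ (2 / r²)`; hence the error
exponent `2 (r - 1) / r²`.
-/

variable {ι : Type*}

section Counting

/-- A staircase region: a set of vectors with positive coordinates that is closed under decreasing
the coordinates within the positive orthant. -/
structure IsPosLowerSet (S : Set (ι → ℝ)) : Prop where
  pos : ∀ y ∈ S, ∀ i, 0 < y i
  mem_of_le : ∀ y ∈ S, ∀ z : ι → ℝ, (∀ i, 0 < z i) → z ≤ y → z ∈ S

/-- The vectors of natural numbers that lie in a set of real vectors. -/
def natPoints (S : Set (ι → ℝ)) : Set (ι → ℕ) := {k | (fun i => (k i : ℝ)) ∈ S}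

lemma IsPosLowerSet.pos_of_mem_natPoints {S : Set (ι → ℝ)} (hS : IsPosLowerSet S) :
    ∀ k ∈ natPoints S, ∀ i, 0 < k i :=
  fun _ hk i => Nat.cast_pos.1 (hS.pos _ hk i)

/-- The coordinatewise ceiling. Its fibres over vectors of positive integers are unit cubes. -/
noncomputable def piCeil (y : ι → ℝ) : ι → ℕ := fun i => ⌈y i⌉₊

lemma piCeil_preimage_singleton {k : ι → ℕ} (hk : ∀ i, 0 < k i) :
    piCeil ⁻¹' {k} = Set.univ.pi fun i => Set.Ioc ((k i : ℝ) - 1) (k i) := by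
  ext y
  simp only [Set.mem_preimage, Set.mem_singleton_iff, Set.mem_univ_pi, funext_iff]
  refine forall_congr' fun i => ?_
  rw [piCeil, Nat.ceil_eq_iff (hk i).ne', Nat.cast_pred (hk i), Set.mem_Ioc]

variable [Fintype ι]

lemma volume_piCeil_preimage {K : Set (ι → ℕ)} (hK : ∀ k ∈ K, ∀ i, 0 < k i) :
    volume (piCeil ⁻¹' K) = K.encard := by
  have volume_fibre (k : K) : volume (piCeil ⁻¹' {k.1}) = 1 := by
    simp [piCeil_preimage_singleton (hK k k.2), Real.volume_pi_Ioc]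
  have measurableSet_fibre : ∀ k ∈ K, MeasurableSet (piCeil ⁻¹' {k}) := fun k hk => by
    rw [piCeil_preimage_singleton (hK k hk)]
    exact .univ_pi fun _ => measurableSet_Ioc
  rw [← tsum_measure_preimage_singleton K.to_countable measurableSet_fibre]
  simp only [volume_fibre, ENNReal.tsum_set_one]

namespace IsPosLowerSet

variable {S : Set (ι → ℝ)} (hS : IsPosLowerSet S)

include hS

lemma encard_natPoints_le_volume : (natPoints S).encard ≤ volume S := by
  rw [← volume_piCeil_preimage hS.pos_of_mem_natPoints]
  refine measure_mono fun y hy => ?_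
  exact hS.mem_of_le _ hy y (fun i => Nat.ceil_pos.1 (hS.pos_of_mem_natPoints _ hy i))
    fun i => Nat.le_ceil _

/-- Subtracting `(1, …, 1)` from `y` leads to a point whose ceiling is still at most `y`. -/
lemma volume_one_lt_le_encard :
    volume {y ∈ S | ∀ i, 1 < y i} ≤ (natPoints S).encard := by
  rw [← volume_piCeil_preimage hS.pos_of_mem_natPoints,
    ← measure_preimage_add_right volume (1 : ι → ℝ)]
  refine measure_mono fun y ⟨hyS, hy⟩ => ?_
  have y_pos : ∀ i, 0 < y i := fun i => by simpa using hy i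
  exact hS.mem_of_le _ hyS _ (fun i => Nat.cast_pos.2 (Nat.ceil_pos.2 (y_pos i)))
    fun i => (Nat.ceil_lt_add_one (y_pos i).le).le

lemma volume_le_encard_add_sum :
    volume S ≤ (natPoints S).encard + ∑ i, volume (S ∩ {y | y i ≤ 1}) := by
  have cover : S ⊆ {y ∈ S | ∀ i, 1 < y i} ∪ ⋃ i, S ∩ {y | y i ≤ 1} := by
    intro y hy
    by_cases hy1 : ∀ i, 1 < y i
    · exact .inl ⟨hy, hy1⟩
    · obtain ⟨i, hi⟩ := not_forall.1 hy1
      exact .inr (Set.mem_iUnion.2 ⟨i, hy, not_lt.1 hi⟩)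
  exact (measure_mono cover).trans <| (measure_union_le _ _).trans <|
    add_le_add hS.volume_one_lt_le_encard (measure_iUnion_fintype_le _ _)

end IsPosLowerSet

end Counting

section DoubleSums

lemma two_nsmul_sum_filter_le {M : Type*} [Fintype ι] [LinearOrder ι] [AddCommMonoid M]
    {f : ι → ι → M} (hf : ∀ i j, f i j = f j i) :
    2 • ∑ p : ι × ι with p.1 ≤ p.2, f p.1 p.2 = ∑ i, ∑ j, f i j + ∑ i, f i i := by
  have sum_swap : ∑ p : ι × ι with p.2 ≤ p.1, f p.1 p.2 = ∑ p : ι × ι with p.1 ≤ p.2, f p.1 p.2 :=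
    sum_equiv (Equiv.prodComm ι ι) (by simp) fun p _ => hf p.1 p.2
  have union_eq : univ.filter (fun p : ι × ι => p.1 ≤ p.2) ∪ univ.filter (fun p => p.2 ≤ p.1)
      = univ := by
    ext p; simp [le_total]
  have inter_eq : univ.filter (fun p : ι × ι => p.1 ≤ p.2) ∩ univ.filter (fun p => p.2 ≤ p.1)
      = univ.diag := by
    ext p; simp [le_antisymm_iff]
  calc 2 • ∑ p : ι × ι with p.1 ≤ p.2, f p.1 p.2
      = ∑ p : ι × ι with p.1 ≤ p.2, f p.1 p.2 + ∑ p : ι × ι with p.2 ≤ p.1, f p.1 p.2 := by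
        rw [two_nsmul, sum_swap]
    _ = ∑ i, ∑ j, f i j + ∑ i, f i i := by
        rw [← sum_union_inter, union_eq, inter_eq, sum_diag, Fintype.sum_prod_type]

variable {R : Type*} [CommRing R] [LinearOrder R] [IsStrictOrderedRing R]

lemma two_mul_sum_sum_max (J : Finset ι) (u : ι → R) :
    2 * ∑ i ∈ J, ∑ j ∈ J, max (u i) (u j)
      = 2 * (#J * ∑ i ∈ J, u i) + ∑ i ∈ J, ∑ j ∈ J, |u i - u j| := by
  have two_mul_max (a b : R) : 2 * max a b = a + b + |a - b| := by
    rw [two_mul, ← two_nsmul, two_nsmul_sup_eq_add_add_abs_sub, abs_sub_comm]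
  simp only [mul_sum, two_mul_max, sum_add_distrib, sum_const, nsmul_eq_mul]
  simp only [← mul_sum]
  ring

lemma card_mul_sum_abs_le (J : Finset ι) (u : ι → R) :
    #J * ∑ i ∈ J, |u i| ≤ #J * |∑ i ∈ J, u i| + ∑ i ∈ J, ∑ j ∈ J, |u i - u j| := by
  have card_mul_abs_le (i : ι) : #J * |u i| ≤ |∑ j ∈ J, u j| + ∑ j ∈ J, |u i - u j| :=
    calc #J * |u i| = |∑ j ∈ J, u j + ∑ j ∈ J, (u i - u j)| := by
          rw [← sum_add_distrib, ← Nat.abs_cast #J, ← abs_mul]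
          simp
      _ ≤ |∑ j ∈ J, u j| + ∑ j ∈ J, |u i - u j| :=
          (abs_add_le _ _).trans (add_le_add_right (abs_sum_le_sum_abs _ _) _)
  calc #J * ∑ i ∈ J, |u i| = ∑ i ∈ J, #J * |u i| := mul_sum ..
    _ ≤ ∑ i ∈ J, (|∑ j ∈ J, u j| + ∑ j ∈ J, |u i - u j|) := sum_le_sum fun i _ => card_mul_abs_le i
    _ = #J * |∑ i ∈ J, u i| + ∑ i ∈ J, ∑ j ∈ J, |u i - u j| := by
        rw [sum_add_distrib, sum_const, nsmul_eq_mul]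

variable [Fintype ι] [DecidableEq ι]

lemma sum_erase_le_sum_sum_max (t : ι → R) (i₀ : ι) :
    4 * t i₀ + 2 * ((#(univ.erase i₀) + 3) * ∑ j ∈ univ.erase i₀, t j)
        + ∑ i ∈ univ.erase i₀, ∑ j ∈ univ.erase i₀, |t i - t j|
      ≤ 2 * (∑ i, ∑ j, max (t i) (t j) + ∑ i, t i) := by
  set J := univ.erase i₀
  have sum_split (f : ι → R) : ∑ i, f i = f i₀ + ∑ j ∈ J, f j :=
    (add_sum_erase _ f (mem_univ i₀)).symm
  have double_sum_split : ∑ i, ∑ j, max (t i) (t j)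
      = t i₀ + 2 * ∑ j ∈ J, max (t i₀) (t j) + ∑ i ∈ J, ∑ j ∈ J, max (t i) (t j) := by
    simp only [sum_split, sum_add_distrib, max_self, max_comm _ (t i₀)]
    ring
  have cross_terms : ∑ j ∈ J, t j ≤ ∑ j ∈ J, max (t i₀) (t j) :=
    sum_le_sum fun j _ => le_max_right _ _
  rw [double_sum_split, sum_split t]
  linarith [two_mul_sum_sum_max J t]

end DoubleSums

section WallInequality

-- The precise constants are immaterial: after exponentiating, `0 < 1 / 20` makes the weights of the
-- coordinates in `J` integrable, and `3 / 4 < 1` that of the remaining one.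
lemma sum_add_abs_le_of_spread_le {J : Finset ι} {u : ι → ℝ} {τ : ℝ} (hτ : τ ≤ 0)
    (h : 4 * τ + 2 * ((#J + 3) * ∑ j ∈ J, u j) + ∑ i ∈ J, ∑ j ∈ J, |u i - u j| ≤ 0) :
    ∑ j ∈ J, (u j + 1 / 20 * |u j|) ≤ -(3 / 4) * τ := by
  rcases J.eq_empty_or_nonempty with rfl | hJ
  · rw [sum_empty]; linarith
  have one_le_card : (1 : ℝ) ≤ #J := by exact_mod_cast hJ.card_pos
  have deviation := card_mul_sum_abs_le J u
  have deviation_nonneg : 0 ≤ ∑ i ∈ J, ∑ j ∈ J, |u i - u j| := by positivity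
  rw [sum_add_distrib, ← mul_sum]
  set U := ∑ j ∈ J, u j
  set A := ∑ j ∈ J, |u j|
  set Q := ∑ i ∈ J, ∑ j ∈ J, |u i - u j|
  have card_pos : (0 : ℝ) < #J := one_pos.trans_le one_le_card
  rcases le_total 0 U with hU | hU
  · rw [abs_of_nonneg hU] at deviation
    have four_mul_U_le : 4 * U ≤ (#J + 3) * U := by gcongr; linarith
    have Q_le : Q ≤ #J * Q := le_mul_of_one_le_left deviation_nonneg one_le_card
    have A_le : A ≤ U + Q := le_of_mul_le_mul_left (by linarith) card_pos
    linarith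
  · rw [abs_of_nonpos hU] at deviation
    have Q_le : Q ≤ #J * (-4 * τ - 8 * U) := by nlinarith
    have A_le : A ≤ -4 * τ - 9 * U := le_of_mul_le_mul_left (by linarith) card_pos
    linarith

variable [Fintype ι] [DecidableEq ι]

lemma sum_erase_add_abs_le_of_sum_sum_max_le {t : ι → ℝ} {i₀ : ι} {L : ℝ} (hL : 0 ≤ L)
    (ht : t i₀ ≤ 0) (h : ∑ i, ∑ j, max (t i) (t j) + ∑ i, t i ≤ 2 * L) :
    ∑ j ∈ univ.erase i₀, (t j - 2 / (Fintype.card ι : ℝ) ^ 2 * L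
        + 1 / 20 * |t j - 2 / (Fintype.card ι : ℝ) ^ 2 * L|) ≤ -(3 / 4) * t i₀ := by
  have h_max := sum_erase_le_sum_sum_max t i₀
  have card_eq : (Fintype.card ι : ℝ) = #(univ.erase i₀) + 1 := by
    rw [← card_univ, ← card_erase_add_one (mem_univ i₀), Nat.cast_succ]
  rw [card_eq]
  set J := univ.erase i₀
  set s := 2 / (#J + 1 : ℝ) ^ 2 * L
  refine sum_add_abs_le_of_spread_le ht ?_
  simp only [sub_sub_sub_cancel_right, sum_sub_distrib, sum_const, nsmul_eq_mul]
  rcases J.eq_empty_or_nonempty with hJ | hJ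
  · simp only [hJ, card_empty, Nat.cast_zero, sum_empty]
    linarith
  have one_le_card : (1 : ℝ) ≤ #J := by exact_mod_cast hJ.card_pos
  have two_mul_L_le : 2 * L ≤ (#J + 3) * (#J * s) := by
    have : 2 ≤ (#J + 3) * #J * (2 / (#J + 1 : ℝ) ^ 2) := by
      rw [mul_div_assoc', le_div_iff₀ (by positivity)]
      nlinarith
    nlinarith
  linarith

end WallInequality

section Weights

/-- The weight `y ^ (-a)` on `(0, 1]`, for the coordinate close to its wall. -/
noncomputable def wallWeight (a : ℝ) : ℝ → ℝ := (Set.Ioc 0 1).indicator fun y => y ^ (-a)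

/-- The weight `y⁻¹ * exp (-ε * |log y|)` on `(0, ∞)`, for the remaining coordinates after
rescaling. -/
noncomputable def bulkWeight (ε : ℝ) : ℝ → ℝ :=
  (Set.Ioi 0).indicator fun y => Real.exp (-(Real.log y + ε * |Real.log y|))

lemma wallWeight_nonneg (a : ℝ) : 0 ≤ wallWeight a :=
  Set.indicator_nonneg fun _ hy => Real.rpow_nonneg hy.1.le _

lemma bulkWeight_nonneg (ε : ℝ) : 0 ≤ bulkWeight ε :=
  Set.indicator_nonneg fun _ _ => (Real.exp_pos _).le

lemma wallWeight_of_mem {a y : ℝ} (hy : y ∈ Set.Ioc 0 1) :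
    wallWeight a y = Real.exp (-a * Real.log y) := by
  rw [wallWeight, Set.indicator_of_mem hy, Real.rpow_def_of_pos hy.1, mul_comm]

lemma bulkWeight_of_pos {ε y : ℝ} (hy : 0 < y) :
    bulkWeight ε y = Real.exp (-(Real.log y + ε * |Real.log y|)) :=
  Set.indicator_of_mem (Set.mem_Ioi.2 hy) _

lemma integrableOn_Ioc_rpow {a : ℝ} (ha : -1 < a) :
    IntegrableOn (fun y : ℝ => y ^ a) (Set.Ioc 0 1) :=
  (intervalIntegrable_iff_integrableOn_Ioc_of_le zero_le_one).1
    (intervalIntegral.intervalIntegrable_rpow' ha)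

lemma integrable_wallWeight {a : ℝ} (ha : a < 1) : Integrable (wallWeight a) :=
  (integrable_indicator_iff measurableSet_Ioc).2 (integrableOn_Ioc_rpow (neg_lt_neg ha))

lemma integrable_bulkWeight {ε : ℝ} (hε : 0 < ε) : Integrable (bulkWeight ε) := by
  rw [bulkWeight, integrable_indicator_iff measurableSet_Ioi,
    ← Set.Ioc_union_Ioi_eq_Ioi (zero_le_one (α := ℝ)), integrableOn_union]
  constructor
  · refine (integrableOn_Ioc_rpow (a := -1 + ε) (by linarith)).congr_fun (fun y hy => ?_)
      measurableSet_Ioc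
    simp only [abs_of_nonpos (Real.log_nonpos hy.1.le hy.2), Real.rpow_def_of_pos hy.1]
    ring_nf
  · refine (integrableOn_Ioi_rpow_of_lt (a := -1 - ε) (by linarith) one_pos).congr_fun
      (fun y (hy : 1 < y) => ?_) measurableSet_Ioi
    simp only [abs_of_nonneg (Real.log_nonneg hy.le), Real.rpow_def_of_pos (one_pos.trans hy)]
    ring_nf

lemma volume_le_integral_mul_integral_pow [Fintype ι] [DecidableEq ι] {S : Set (ι → ℝ)} {i₀ : ι}
    {f g : ℝ → ℝ} (hf : Integrable f) (hg : Integrable g) (hf_nonneg : 0 ≤ f) (hg_nonneg : 0 ≤ g)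
    (hS : ∀ y ∈ S, 1 ≤ f (y i₀) * ∏ j ∈ univ.erase i₀, g (y j)) :
    volume S ≤ ENNReal.ofReal ((∫ y, f y) * (∫ y, g y) ^ (Fintype.card ι - 1)) := by
  set F : ι → ℝ → ℝ := Function.update (fun _ => g) i₀ f with hF
  have F_integrable : ∀ i, Integrable (F i) :=
    (Function.forall_update_iff _ fun _ h => Integrable h volume).2 ⟨hf, fun _ _ => hg⟩
  have F_nonneg : ∀ i, 0 ≤ F i :=
    (Function.forall_update_iff _ fun _ h => 0 ≤ h).2 ⟨hf_nonneg, fun _ _ => hg_nonneg⟩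
  have prod_F (Φ : ι → (ℝ → ℝ) → ℝ) :
      ∏ i, Φ i (F i) = Φ i₀ f * ∏ j ∈ univ.erase i₀, Φ j g := by
    rw [← mul_prod_erase _ _ (mem_univ i₀), hF, Function.update_self]
    congr 1
    refine prod_congr rfl fun j hj => ?_
    rw [Function.update_of_ne (ne_of_mem_erase hj)]
  have prod_integrable : Integrable fun y : ι → ℝ => ∏ i, F i (y i) :=
    .fintype_prod F_integrable
  calc volume S ≤ ∫⁻ y : ι → ℝ, ENNReal.ofReal (∏ i, F i (y i)) := by
        refine meas_le_lintegral₀ prod_integrable.aemeasurable.ennreal_ofReal fun y hy => ?_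
        rw [ENNReal.one_le_ofReal, prod_F fun i h => h (y i)]
        exact hS y hy
    _ = ENNReal.ofReal (∏ i, ∫ y, F i y) := by
        rw [← ofReal_integral_eq_lintegral_ofReal prod_integrable
          (.of_forall fun y => prod_nonneg fun i _ => F_nonneg i _),
          integral_fintype_prod_volume_eq_prod]
    _ = ENNReal.ofReal ((∫ y, f y) * (∫ y, g y) ^ (Fintype.card ι - 1)) := by
        rw [prod_F fun _ h => ∫ y, h y, prod_const, card_erase_of_mem (mem_univ _), card_univ]

end Weights

section Hpoly

section IntervalSums

variable [Preorder ι] [LocallyFiniteOrder ι] {y : ι → ℝ} {a b i : ι}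

lemma le_sum_Icc (hy : ∀ i, 0 < y i) (hi : i ∈ Icc a b) : y i ≤ ∑ j ∈ Icc a b, y j :=
  single_le_sum (fun j _ => (hy j).le) hi

lemma sum_Icc_pos (hy : ∀ i, 0 < y i) (hab : a ≤ b) : 0 < ∑ i ∈ Icc a b, y i :=
  sum_pos (fun i _ => hy i) (nonempty_Icc.2 hab)

end IntervalSums

variable {r : ℕ} {y z : Fin r → ℝ} {X : ℝ}

lemma hpoly_pos (hy : ∀ i, 0 < y i) : 0 < hpoly r y :=
  prod_pos fun _ hp => sum_Icc_pos hy (mem_filter.1 hp).2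

lemma hpoly_mono (hy : ∀ i, 0 < y i) (hyz : y ≤ z) : hpoly r y ≤ hpoly r z :=
  prod_le_prod (fun _ hp => (sum_Icc_pos hy (mem_filter.1 hp).2).le)
    fun _ _ => sum_le_sum fun i _ => hyz i

lemma coord_le_hpoly (hy : ∀ i, 1 ≤ y i) (i : Fin r) : y i ≤ hpoly r y := by
  have y_pos : ∀ i, 0 < y i := fun i => one_pos.trans_le (hy i)
  calc y i = ∏ p ∈ {(i, i)}, ∑ j ∈ Icc p.1 p.2, y j := by simp
    _ ≤ hpoly r y := by
      refine prod_le_prod_of_subset_of_one_le (by simp) (by simp [(y_pos i).le]) fun p hp _ => ?_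
      exact (hy p.1).trans (le_sum_Icc y_pos (left_mem_Icc.2 ((mem_filter.1 hp).2)))

lemma sum_sum_max_log_le (hy : ∀ i, 0 < y i) :
    ∑ i, ∑ j, max (Real.log (y i)) (Real.log (y j)) + ∑ i, Real.log (y i)
      ≤ 2 * Real.log (hpoly r y) := by
  have symmetrized := two_nsmul_sum_filter_le
    (f := fun i j => max (Real.log (y i)) (Real.log (y j))) fun _ _ => max_comm _ _
  simp only [max_self, nsmul_eq_mul, Nat.cast_ofNat] at symmetrized
  rw [← symmetrized, hpoly, Real.log_prod fun p hp => (sum_Icc_pos hy (mem_filter.1 hp).2).ne']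
  gcongr with p hp
  have hp_le : p.1 ≤ p.2 := (mem_filter.1 hp).2
  exact max_le (Real.log_le_log (hy _) (le_sum_Icc hy (left_mem_Icc.2 hp_le)))
    (Real.log_le_log (hy _) (le_sum_Icc hy (right_mem_Icc.2 hp_le)))

lemma card_filter_fst_le_snd (r : ℕ) : #{p : Fin r × Fin r | p.1 ≤ p.2} = (r + 1).choose 2 := by
  have symmetrized := two_nsmul_sum_filter_le (ι := Fin r) (f := fun _ _ => 1) fun _ _ => rfl
  simp only [sum_const, card_univ, Fintype.card_fin, smul_eq_mul, mul_one] at symmetrized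
  rw [Nat.choose_two_right, Nat.add_sub_cancel, add_one_mul, ← symmetrized,
    Nat.mul_div_cancel_left _ two_pos]

lemma hpoly_smul (s : ℝ) (y : Fin r → ℝ) :
    hpoly r (s • y) = s ^ (r + 1).choose 2 * hpoly r y := by
  simp only [hpoly, Pi.smul_apply, smul_eq_mul, ← mul_sum, prod_mul_distrib, prod_const,
    card_filter_fst_le_snd]

/-- The region `{h_r ≤ X}` of the positive orthant. -/
def hpolySublevel (r : ℕ) (X : ℝ) : Set (Fin r → ℝ) := {y | (∀ i, 0 < y i) ∧ hpoly r y ≤ X}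

lemma isPosLowerSet_hpolySublevel (r : ℕ) (X : ℝ) : IsPosLowerSet (hpolySublevel r X) where
  pos _ hy := hy.1
  mem_of_le _ hy _ hz hzy := ⟨hz, (hpoly_mono hz hzy).trans hy.2⟩

lemma finite_natPoints_hpolySublevel (r : ℕ) (X : ℝ) :
    (natPoints (hpolySublevel r X)).Finite := by
  refine (Set.finite_Iic fun _ : Fin r => ⌊X⌋₊).subset fun k hk i => Nat.le_floor ?_
  have one_le : ∀ i, (1 : ℝ) ≤ k i := fun i =>
    Nat.one_le_cast.2 ((isPosLowerSet_hpolySublevel r X).pos_of_mem_natPoints k hk i)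
  exact (coord_le_hpoly one_le i).trans hk.2

open Pointwise in
lemma volume_hpolySublevel_mul (hr : r ≠ 0) {a : ℝ} (ha : 0 < a) (X : ℝ) :
    volume (hpolySublevel r (a * X))
      = ENNReal.ofReal (a ^ (2 / (r + 1) : ℝ)) * volume (hpolySublevel r X) := by
  have degree_ne_zero : (r + 1).choose 2 ≠ 0 := (Nat.choose_pos (by lia)).ne'
  set s := a ^ (((r + 1).choose 2 : ℝ)⁻¹) with hs
  have s_pos : 0 < s := Real.rpow_pos_of_pos ha _
  have s_pow : s ^ (r + 1).choose 2 = a := Real.rpow_inv_natCast_pow ha.le degree_ne_zero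
  have dilation : hpolySublevel r (a * X) = s • hpolySublevel r X := by
    ext y
    rw [Set.mem_smul_set_iff_inv_smul_mem₀ s_pos.ne']
    simp only [hpolySublevel, Set.mem_ofPred_eq, hpoly_smul, inv_pow, s_pow, Pi.smul_apply,
      smul_eq_mul, inv_mul_le_iff₀ ha, mul_pos_iff_of_pos_left (inv_pos.2 s_pos)]
  have s_pow_card : s ^ r = a ^ (2 / (r + 1) : ℝ) := by
    rw [hs, ← Real.rpow_natCast, ← Real.rpow_mul ha.le, Nat.cast_choose_two]
    congr 1
    rw [Nat.cast_succ, add_sub_cancel_right]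
    field_simp
  rw [dilation, Measure.addHaar_smul_of_nonneg _ s_pos.le, Module.finrank_fin_fun, s_pow_card]

lemma one_le_wallWeight_mul_prod_bulkWeight (hX : 1 ≤ X) (hy : y ∈ hpolySublevel r X) {i₀ : Fin r}
    (hi₀ : y i₀ ≤ 1) :
    1 ≤ wallWeight (3 / 4) (y i₀) *
      ∏ j ∈ univ.erase i₀, bulkWeight (1 / 20) (y j / X ^ (2 / (r : ℝ) ^ 2)) := by
  obtain ⟨y_pos, hyX⟩ := hy
  have X_pos : 0 < X := one_pos.trans_le hX
  have log_bound : ∑ i, ∑ j, max (Real.log (y i)) (Real.log (y j)) + ∑ i, Real.log (y i)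
      ≤ 2 * Real.log X :=
    (sum_sum_max_log_le y_pos).trans <|
      mul_le_mul_of_nonneg_left (Real.log_le_log (hpoly_pos y_pos) hyX) two_pos.le
  have exponent_bound := sum_erase_add_abs_le_of_sum_sum_max_le (i₀ := i₀)
    (Real.log_nonneg hX) (Real.log_nonpos (y_pos i₀).le hi₀) log_bound
  have log_rescaled (j : Fin r) : Real.log (y j / X ^ (2 / (r : ℝ) ^ 2))
      = Real.log (y j) - 2 / (r : ℝ) ^ 2 * Real.log X := by
    rw [Real.log_div (y_pos j).ne' (by positivity), Real.log_rpow X_pos]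
  rw [Fintype.card_fin] at exponent_bound
  rw [wallWeight_of_mem ⟨y_pos i₀, hi₀⟩, prod_congr rfl fun j _ => bulkWeight_of_pos
    (div_pos (y_pos j) (by positivity)), ← Real.exp_sum, ← Real.exp_add, Real.one_le_exp_iff,
    sum_neg_distrib]
  simp only [log_rescaled]
  linarith

lemma exists_volume_hpolySublevel_inter_le (r : ℕ) :
    ∃ C : ℝ, 0 ≤ C ∧ ∀ X, 1 ≤ X → ∀ i, volume (hpolySublevel r X ∩ {y | y i ≤ 1})
      ≤ ENNReal.ofReal (C * X ^ (2 * (r - 1) / (r : ℝ) ^ 2)) := by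
  refine ⟨(∫ y, wallWeight (3 / 4) y) * (∫ y, bulkWeight (1 / 20) y) ^ (r - 1),
    mul_nonneg (integral_nonneg (wallWeight_nonneg _))
      (pow_nonneg (integral_nonneg (bulkWeight_nonneg _)) _), fun X hX i => ?_⟩
  have X_pos : 0 < X := one_pos.trans_le hX
  set s := X ^ (2 / (r : ℝ) ^ 2) with hs
  have s_pos : 0 < s := by positivity
  have s_pow : s ^ (r - 1) = X ^ (2 * (r - 1) / (r : ℝ) ^ 2) := by
    rw [hs, ← Real.rpow_mul_natCast X_pos.le, Nat.cast_pred i.pos]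
    ring_nf
  have volume_le := volume_le_integral_mul_integral_pow (S := hpolySublevel r X ∩ {y | y i ≤ 1})
    (integrable_wallWeight (a := 3 / 4) (by norm_num))
    ((integrable_bulkWeight (ε := 1 / 20) (by norm_num)).comp_div s_pos.ne')
    (wallWeight_nonneg _) (fun y => bulkWeight_nonneg _ (y / s))
    fun y hy => one_le_wallWeight_mul_prod_bulkWeight hX hy.1 hy.2
  rwa [Measure.integral_comp_div, abs_of_pos s_pos, smul_eq_mul, Fintype.card_fin, mul_pow, s_pow,
    mul_comm (X ^ _), ← mul_assoc] at volume_le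

end Hpoly

section Asymptotics

variable {r : ℕ}

lemma exists_volume_hpolySublevel_le (r : ℕ) :
    ∃ C : ℝ, 0 ≤ C ∧ ∀ X, 1 ≤ X → volume (hpolySublevel r X)
      ≤ ENNReal.ofReal ((natPoints (hpolySublevel r X)).ncard
          + C * X ^ (2 * (r - 1) / (r : ℝ) ^ 2)) := by
  obtain ⟨C, C_nonneg, hC⟩ := exists_volume_hpolySublevel_inter_le r
  refine ⟨r * C, by positivity, fun X hX => ?_⟩
  have error_nonneg : 0 ≤ C * X ^ (2 * (r - 1) / (r : ℝ) ^ 2) :=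
    mul_nonneg C_nonneg (Real.rpow_nonneg (zero_le_one.trans hX) _)
  calc volume (hpolySublevel r X)
      ≤ (natPoints (hpolySublevel r X)).encard
        + ∑ i, volume (hpolySublevel r X ∩ {y | y i ≤ 1}) :=
        (isPosLowerSet_hpolySublevel r X).volume_le_encard_add_sum
    _ ≤ (natPoints (hpolySublevel r X)).encard
        + ∑ _i : Fin r, ENNReal.ofReal (C * X ^ (2 * (r - 1) / (r : ℝ) ^ 2)) := by
        gcongr with i
        exact hC X hX i
    _ = _ := by
        rw [← (finite_natPoints_hpolySublevel r X).cast_ncard_eq, ENat.toENNReal_coe, sum_const,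
          card_univ, Fintype.card_fin, nsmul_eq_mul, mul_assoc,
          ENNReal.ofReal_add (Nat.cast_nonneg _) (mul_nonneg (Nat.cast_nonneg r) error_nonneg),
          ENNReal.ofReal_mul (Nat.cast_nonneg r), ENNReal.ofReal_natCast, ENNReal.ofReal_natCast]

lemma volume_hpolySublevel_ne_top (hr : r ≠ 0) {X : ℝ} (hX : 0 < X) :
    volume (hpolySublevel r X) ≠ ⊤ := by
  obtain ⟨C, -, hC⟩ := exists_volume_hpolySublevel_le r
  rw [← mul_one X, volume_hpolySublevel_mul hr hX]
  exact ENNReal.mul_ne_top ENNReal.ofReal_ne_top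
    (ne_top_of_le_ne_top ENNReal.ofReal_ne_top (hC 1 le_rfl))

lemma toReal_volume_hpolySublevel_mul (hr : r ≠ 0) {a : ℝ} (ha : 0 < a) (X : ℝ) :
    (volume (hpolySublevel r (a * X))).toReal
      = (volume (hpolySublevel r X)).toReal * a ^ (2 / (r + 1) : ℝ) := by
  rw [volume_hpolySublevel_mul hr ha, ENNReal.toReal_mul, ENNReal.toReal_ofReal (by positivity),
    mul_comm]

lemma ncard_natPoints_hpolySublevel_le (hr : r ≠ 0) {X : ℝ} (hX : 0 < X) :
    (natPoints (hpolySublevel r X)).ncard ≤ (volume (hpolySublevel r X)).toReal := by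
  have encard_le := (isPosLowerSet_hpolySublevel r X).encard_natPoints_le_volume
  rw [← (finite_natPoints_hpolySublevel r X).cast_ncard_eq, ENat.toENNReal_coe] at encard_le
  simpa using ENNReal.toReal_mono (volume_hpolySublevel_ne_top hr hX) encard_le

lemma exists_toReal_volume_hpolySublevel_le (hr : r ≠ 0) :
    ∃ C : ℝ, ∀ X, 0 < X → (volume (hpolySublevel r X)).toReal
      ≤ (natPoints (hpolySublevel r X)).ncard + C * X ^ (2 * (r - 1) / (r : ℝ) ^ 2) := by
  obtain ⟨C, C_nonneg, hC⟩ := exists_volume_hpolySublevel_le r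
  set V := (volume (hpolySublevel r 1)).toReal with hV
  refine ⟨V + C, fun X X_pos => ?_⟩
  set E := X ^ (2 * (r - 1) / (r : ℝ) ^ 2)
  have E_nonneg : 0 ≤ E := Real.rpow_nonneg X_pos.le _
  have error_nonneg : 0 ≤ C * E := mul_nonneg C_nonneg E_nonneg
  have V_nonneg : 0 ≤ V := ENNReal.toReal_nonneg
  rcases le_total 1 X with hX | hX
  · have volume_le := ENNReal.toReal_le_of_le_ofReal
      (add_nonneg (Nat.cast_nonneg _) error_nonneg) (hC X hX)
    linarith [mul_nonneg V_nonneg E_nonneg]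
  · have exponent_le : 2 * (r - 1) / (r : ℝ) ^ 2 ≤ 2 / (r + 1) := by
      rw [div_le_div_iff₀ (by positivity) (by positivity)]
      linarith
    have power_le : X ^ (2 / (r + 1) : ℝ) ≤ E :=
      Real.rpow_le_rpow_of_exponent_ge X_pos hX exponent_le
    calc (volume (hpolySublevel r X)).toReal = V * X ^ (2 / (r + 1) : ℝ) := by
          rw [hV, ← toReal_volume_hpolySublevel_mul hr X_pos, mul_one]
      _ ≤ V * E := mul_le_mul_of_nonneg_left power_le V_nonneg
      _ ≤ (natPoints (hpolySublevel r X)).ncard + (V + C) * E := by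
          rw [add_mul, ← add_assoc, add_right_comm]
          exact le_add_of_nonneg_left (add_nonneg (Nat.cast_nonneg _) error_nonneg)

lemma crconst_pos (r : ℕ) : 0 < crconst r :=
  prod_pos fun _ _ => Nat.factorial_pos _

lemma setOf_apoly_le_eq_hpolySublevel (r : ℕ) (x : ℝ) :
    {y : Fin r → ℝ | (∀ i, 0 < y i) ∧ apoly r y ≤ x} = hpolySublevel r (crconst r * x) := by
  have c_pos : (0 : ℝ) < crconst r := Nat.cast_pos.2 (crconst_pos r)
  simp only [apoly, div_le_iff₀' c_pos, hpolySublevel]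

lemma setOf_apoly_natCast_le_eq_natPoints (r : ℕ) (x : ℝ) :
    {k : Fin r → ℕ | (∀ i, 0 < k i) ∧ apoly r (fun i => (k i : ℝ)) ≤ x}
      = natPoints (hpolySublevel r (crconst r * x)) := by
  simp only [← setOf_apoly_le_eq_hpolySublevel, natPoints, Set.mem_ofPred_eq, Nat.cast_pos]

end Asymptotics

/-- Proposition 1.1: `R_r(x) = C_r x^{2/(r+1)} + O_r(x^{2(r-1)/r²})`, where
`R_r(x) = #{k ∈ ℕ^r : a_r(k) ≤ x}` and `C_r` is the volume of `{a_r ≤ 1}`. -/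
theorem stmt3 (r : ℕ) (hr : 1 ≤ r) :
    ∃ C : ℝ, ∀ x : ℝ, 0 < x →
      |({k : Fin r → ℕ | (∀ i, 0 < k i) ∧ apoly r (fun i => (k i : ℝ)) ≤ x}.ncard : ℝ)
          - (volume {y : Fin r → ℝ | (∀ i, 0 < y i) ∧ apoly r y ≤ 1}).toReal
              * x ^ ((2 : ℝ) / (r + 1))|
        ≤ C * x ^ ((2 * ((r : ℝ) - 1)) / (r : ℝ) ^ 2) := by
  have hr₀ : r ≠ 0 := Nat.one_le_iff_ne_zero.1 hr
  obtain ⟨C, hC⟩ := exists_toReal_volume_hpolySublevel_le hr₀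
  have c_pos : (0 : ℝ) < crconst r := Nat.cast_pos.2 (crconst_pos r)
  refine ⟨C * crconst r ^ (2 * ((r : ℝ) - 1) / (r : ℝ) ^ 2), fun x hx => ?_⟩
  have cx_pos : 0 < crconst r * x := mul_pos c_pos hx
  rw [setOf_apoly_natCast_le_eq_natPoints, setOf_apoly_le_eq_hpolySublevel,
    ← toReal_volume_hpolySublevel_mul hr₀ hx, mul_left_comm x, mul_one, abs_sub_comm,
    abs_of_nonneg (sub_nonneg.2 (ncard_natPoints_hpolySublevel_le hr₀ cx_pos)), mul_assoc,
    ← Real.mul_rpow c_pos.le hx.le, sub_le_iff_le_add']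
  exact hC _ cx_pos
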